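/- arXiv:2207.04665 — 6 statements merged into one kernel-verified Lean document; each statement's English description precedes it below -/
import Mathlib

section
/- Let μ be an infinite cardinal. Assume the Chang's conjecture variant (μ⁺⁺, μ⁺) ↠_μ (μ⁺, μ) holds in the following combinatorial form: for every function g from the set of finite sequences of ordinals below μ⁺⁺ to the ordinals below μ⁺⁺ there is a set X of ordinals below μ⁺⁺ such that |X| = μ⁺, X is closed under g, |X ∩ μ⁺| = μ, and every ordinal below μ belongs to X. Then for every natural number n the polarized partition relation (μ⁺⁺, μ⁺) → (n, μ⁺)_μ holds: for every function f : μ⁺⁺ × μ⁺ → μ there exist H₀ ⊆ μ⁺⁺ with |H₀| = n and H₁ ⊆ μ⁺ with |H₁| = μ⁺ such that f takes at most one value on H₀ × H₁. -/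
open Cardinal Set

/-!
To a color `c` and a finite list of ordinals `α`, let `g` assign a strict bound below `μ⁺` of the
set of all `β < μ⁺` with `f α β = c` for each listed `α`, whenever that set is bounded. Take `X`
closed under `g`, as provided by Chang's conjecture. Since `X ∩ μ⁺` has size `μ`, some `δ < μ⁺`
lies above it, and since `X` has size `μ⁺`, the coloring `α ↦ f α δ` takes a single value `c` on
some `H₀ ⊆ X` with `n` elements. The set attached to `c` and `H₀` contains `δ`; if it were bounded,
its bound would lie in `X ∩ μ⁺` but above `δ`. So it is unbounded in `μ⁺`, and thus of size `μ⁺`.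
-/

universe u

/-- The Chang transfer principle `(κ₀, κ₁) ↠_μ (ν₀, ν₁)`, stated through closure under a single
function on finite sequences in place of elementary substructures. -/
def ChangTransfer (κ₀ κ₁ ν₀ ν₁ μ : Cardinal.{u}) : Prop :=
  ∀ g : List Ordinal.{u} → Ordinal.{u},
    (∀ l : List Ordinal, (∀ a ∈ l, a < κ₀.ord) → g l < κ₀.ord) →
    ∃ X : Set Ordinal, X ⊆ Iio κ₀.ord ∧ #X = lift.{u + 1} ν₀ ∧
      (∀ l : List Ordinal, (∀ a ∈ l, a ∈ X) → g l ∈ X) ∧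
      #(↥(X ∩ Iio κ₁.ord)) = lift.{u + 1} ν₁ ∧
      ∀ α : Ordinal, α < μ.ord → α ∈ X

/-- The polarized partition relation `(κ₀, κ₁) → (ν₀, ν₁)_μ`. The coloring is a total function on
ordinals, of which only the values on `κ₀ × κ₁` matter. -/
def PolarizedPartition (κ₀ κ₁ ν₀ ν₁ μ : Cardinal.{u}) : Prop :=
  ∀ f : Ordinal.{u} → Ordinal.{u} → Ordinal.{u},
    (∀ α < κ₀.ord, ∀ β < κ₁.ord, f α β < μ.ord) →
    ∃ H₀ H₁ : Set Ordinal,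
      H₀ ⊆ Iio κ₀.ord ∧ #H₀ = lift.{u + 1} ν₀ ∧
      H₁ ⊆ Iio κ₁.ord ∧ #H₁ = lift.{u + 1} ν₁ ∧
      (image2 f H₀ H₁).Subsingleton

/-- For a sequence `c :: l`, the ordinals `β < o` such that `f α β = c` for every `α` in `l`; the
color comes first so that the pair of `c` and `l` is a single finite sequence. -/
def homogeneousSet (f : Ordinal.{u} → Ordinal.{u} → Ordinal.{u}) (o : Ordinal.{u}) :
    List Ordinal.{u} → Set Ordinal.{u}
  | [] => ∅
  | c :: l => {β | β < o ∧ ∀ α ∈ l, f α β = c}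

lemma lift_cof_le_mk_of_isCofinalFor {o : Ordinal.{u}} {s : Set Ordinal.{u}} (hs : s ⊆ Iio o)
    (hcof : IsCofinalFor (Iio o) s) : lift.{u + 1} o.cof ≤ #s := by
  rw [Ordinal.lift_cof]
  by_contra! hlt
  obtain ⟨β, hβ, hle⟩ := hcof (Ordinal.sSup_add_one_lt_of_lt_cof hlt hs)
  have hbdd : BddAbove ((· + 1) '' s) :=
    ⟨o, forall_mem_image.mpr fun γ hγ => Order.add_one_le_of_lt (hs hγ)⟩
  exact ((le_csSup hbdd (mem_image_of_mem _ hβ)).trans hle).not_gt (lt_add_one β)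

lemma mk_eq_lift_of_isCofinalFor {κ : Cardinal.{u}} (hκ : κ.IsRegular) {s : Set Ordinal.{u}}
    (hs : s ⊆ Iio κ.ord) (hcof : IsCofinalFor (Iio κ.ord) s) : #s = lift.{u + 1} κ := by
  apply le_antisymm
  · simpa only [mk_Iio_ordinal, card_ord] using mk_le_mk_of_subset hs
  · simpa only [hκ.cof_ord] using lift_cof_le_mk_of_isCofinalFor hs hcof

lemma exists_finset_card_eq_forall_eq {α β : Type u} {s : Set α} {t : Set β} {f : α → β}
    (hf : MapsTo f s t) (hs : s.Infinite) (hts : #t < #s) (n : ℕ) :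
    ∃ b ∈ t, ∃ H : Finset α, ↑H ⊆ s ∧ H.card = n ∧ ∀ a ∈ H, f a = b := by
  have : Infinite s := hs.to_subtype
  obtain ⟨b, hb⟩ := exists_infinite_fiber hf.restrict hts
  obtain ⟨H, hH, hcard⟩ := (infinite_coe_iff.mp hb).exists_subset_card_eq n
  refine ⟨b, b.2, H.map (.subtype _), ?_, by rw [Finset.card_map, hcard], ?_⟩
  · simp
  · intro a ha
    obtain ⟨x, hx, rfl⟩ := Finset.mem_map.mp ha
    exact congrArg Subtype.val (hH hx)

lemma ChangTransfer.exists_forall_mem_imp_isCofinalFor {κ₀ κ₁ ν₀ ν₁ μ : Cardinal.{u}}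
    (h : ChangTransfer κ₀ κ₁ ν₀ ν₁ μ) (hκ : κ₁ ≤ κ₀) (hν₁ : ν₁ < κ₁.ord.cof)
    (S : List Ordinal.{u} → Set Ordinal.{u}) :
    ∃ X : Set Ordinal.{u}, X ⊆ Iio κ₀.ord ∧ #X = lift.{u + 1} ν₀ ∧ Iio μ.ord ⊆ X ∧
      ∃ δ < κ₁.ord, ∀ l, (∀ a ∈ l, a ∈ X) → δ ∈ S l → IsCofinalFor (Iio κ₁.ord) (S l) := by
  have hpos : 0 < κ₁.ord := Ordinal.cof_pos.mp (bot_le.trans_lt hν₁)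
  have exists_bound (l) : ∃ γ < κ₁.ord, ¬ IsCofinalFor (Iio κ₁.ord) (S l) → ∀ β ∈ S l, β < γ := by
    by_cases hl : IsCofinalFor (Iio κ₁.ord) (S l)
    · exact ⟨0, hpos, fun hl' => absurd hl hl'⟩
    · simp only [IsCofinalFor, mem_Iio, not_forall, not_exists, not_and, not_le] at hl
      obtain ⟨γ, hγ, hbound⟩ := hl
      exact ⟨γ, hγ, fun _ => hbound⟩
  choose g hg g_bound using exists_bound
  obtain ⟨X, hX, hXcard, hXg, hXκ₁, hXμ⟩ := h g fun l _ => (hg l).trans_le (ord_le_ord.mpr hκ)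
  obtain ⟨δ, hδ, hXδ⟩ : ∃ δ < κ₁.ord, ∀ β ∈ X ∩ Iio κ₁.ord, β < δ := by
    by_contra! hcof
    have := lift_cof_le_mk_of_isCofinalFor inter_subset_right hcof
    exact (this.trans_eq hXκ₁).not_gt (lift_lt.mpr hν₁)
  refine ⟨X, hX, hXcard, hXμ, δ, hδ, fun l hl hδl => ?_⟩
  by_contra hcof
  exact (g_bound l hcof δ hδl).not_gt (hXδ (g l) ⟨hXg l hl, hg l⟩)

lemma subsingleton_image2_homogeneousSet (f : Ordinal.{u} → Ordinal.{u} → Ordinal.{u})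
    (o c : Ordinal.{u}) (l : List Ordinal.{u}) :
    (image2 f {α | α ∈ l} (homogeneousSet f o (c :: l))).Subsingleton := by
  rintro _ ⟨α, hα, β, hβ, rfl⟩ _ ⟨α', hα', β', hβ', rfl⟩
  rw [hβ.2 α hα, hβ'.2 α' hα']

theorem changsConjecture_implies_polarized_partition_general {κ₀ κ₁ ν₀ ν₁ μ : Cardinal.{u}}
    (hκ₁ : κ₁.IsRegular) (hκ : κ₁ ≤ κ₀) (hν₁ : ν₁ < κ₁) (hν₀ : ℵ₀ ≤ ν₀) (hμ : μ < ν₀)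
    (h : ChangTransfer κ₀ κ₁ ν₀ ν₁ μ) (n : ℕ) : PolarizedPartition κ₀ κ₁ n κ₁ μ := by
  intro f hf
  obtain ⟨X, hX, hXcard, hXμ, δ, hδ, hδX⟩ :=
    h.exists_forall_mem_imp_isCofinalFor hκ (by rwa [hκ₁.cof_ord]) (homogeneousSet f κ₁.ord)
  have hXinf : X.Infinite := by
    rwa [← infinite_coe_iff, infinite_iff, hXcard, aleph0_le_lift]
  have hμX : #(Iio μ.ord) < #X := by
    rwa [hXcard, mk_Iio_ordinal, card_ord, lift_lt]
  obtain ⟨c, hc, H, hHX, hHcard, hHc⟩ :=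
    exists_finset_card_eq_forall_eq (fun α hα => hf α (hX hα) δ hδ) hXinf hμX n
  let H₁ := homogeneousSet f κ₁.ord (c :: H.toList)
  have hH₁ : H₁ ⊆ Iio κ₁.ord := fun β hβ => hβ.1
  have hcl : ∀ a ∈ c :: H.toList, a ∈ X :=
    List.forall_mem_cons.mpr ⟨hXμ hc, fun a ha => hHX (Finset.mem_toList.mp ha)⟩
  have hδH₁ : δ ∈ H₁ := ⟨hδ, fun α hα => hHc α (Finset.mem_toList.mp hα)⟩
  refine ⟨H, H₁, hHX.trans hX, ?_, hH₁,
    mk_eq_lift_of_isCofinalFor hκ₁ hH₁ (hδX _ hcl hδH₁), ?_⟩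
  · simp [hHcard]
  · simpa using subsingleton_image2_homogeneousSet f κ₁.ord c H.toList

/-- If the Chang's conjecture variant `(μ⁺⁺, μ⁺) ↠_μ (μ⁺, μ)` holds (in its combinatorial
form in terms of closure under functions on finite sequences), then for every `n < ω` the
polarized partition relation `(μ⁺⁺, μ⁺) → (n, μ⁺)_μ` holds. -/
theorem changsConjecture_implies_polarized_partition
    (μ : Cardinal.{0}) (hμ : ℵ₀ ≤ μ)
    (hCC : ∀ g : List Ordinal.{0} → Ordinal.{0},
      (∀ l : List Ordinal, (∀ a ∈ l, a < (Order.succ (Order.succ μ)).ord) →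
        g l < (Order.succ (Order.succ μ)).ord) →
      ∃ X : Set Ordinal, X ⊆ Set.Iio (Order.succ (Order.succ μ)).ord ∧
        #X = Cardinal.lift.{1} (Order.succ μ) ∧
        (∀ l : List Ordinal, (∀ a ∈ l, a ∈ X) → g l ∈ X) ∧
        #(↥(X ∩ Set.Iio (Order.succ μ).ord)) = Cardinal.lift.{1} μ ∧
        (∀ α : Ordinal, α < μ.ord → α ∈ X)) :
    ∀ n : ℕ, ∀ f : Ordinal → Ordinal → Ordinal,
      (∀ α < (Order.succ (Order.succ μ)).ord, ∀ β < (Order.succ μ).ord, f α β < μ.ord) →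
      ∃ H₀ H₁ : Set Ordinal,
        H₀ ⊆ Set.Iio (Order.succ (Order.succ μ)).ord ∧ #H₀ = (n : Cardinal) ∧
        H₁ ⊆ Set.Iio (Order.succ μ).ord ∧ #H₁ = Cardinal.lift.{1} (Order.succ μ) ∧
        Set.Subsingleton {c : Ordinal | ∃ α ∈ H₀, ∃ β ∈ H₁, f α β = c} := by
  intro n
  simpa only [PolarizedPartition, lift_natCast, image2] using
    changsConjecture_implies_polarized_partition_general (isRegular_succ hμ) (Order.le_succ _)
      (Order.lt_succ μ) (isRegular_succ hμ).aleph0_le (Order.lt_succ μ) hCC n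
end

section
/- Let μ be an infinite cardinal and ν a nonzero cardinal with ν ≤ μ. Suppose I is a normal, fine, μ⁺-complete proper ideal over μ⁺ that is (μ⁺⁺, ν, ν)-saturated. Then the polarized partition relation (μ⁺⁺, μ⁺) → (ν, μ⁺)_μ holds: for every function f : μ⁺⁺ × μ⁺ → μ there exist H₀ ⊆ μ⁺⁺ with |H₀| = ν and H₁ ⊆ μ⁺ with |H₁| = μ⁺ such that f takes at most one value on H₀ × H₁. -/
open Cardinal Set

/-!
By completeness each row `f α` has a positive colour class, and since `μ < cof μ⁺⁺` the same colour
serves for `μ⁺⁺` many rows. Saturation yields `ν` of these rows whose colour classes have a positive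
intersection; fineness and completeness make that intersection a set of size `μ⁺`.
-/

universe u

variable {ι α γ : Type u} {κ ν : Cardinal.{u}} {I : Set (Set α)} {X : Set α} {J : Set ι}

/-- `I` is a `κ`-complete ideal of sets. It may be improper, and it is not assumed to contain the
singletons. -/
structure IsCompleteIdeal (κ : Cardinal.{u}) (I : Set (Set α)) : Prop where
  mem_of_subset : ∀ A ∈ I, ∀ B ⊆ A, B ∈ I
  sUnion_mem : ∀ S ⊆ I, #S < κ → ⋃₀ S ∈ I

/-- `(|J|, ν, ν)`-saturation of an ideal `I` over `X`. The families of positive sets are indexed by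
the members of `J` rather than by a cardinal. -/
def IsSaturatedIdeal (I : Set (Set α)) (X : Set α) (J : Set ι) (ν : Cardinal.{u}) : Prop :=
  ∀ A : ι → Set α, (∀ i ∈ J, A i ⊆ X ∧ A i ∉ I) →
    ∃ S ⊆ J, #S = ν ∧ ∀ T ⊆ S, T.Nonempty → #T ≤ ν → ⋂ i ∈ T, A i ∉ I

namespace IsCompleteIdeal

theorem biUnion_mem (hI : IsCompleteIdeal κ I) {A : ι → Set α} (hJ : #J < κ)
    (hA : ∀ i ∈ J, A i ∈ I) : ⋃ i ∈ J, A i ∈ I := by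
  rw [← sUnion_image]
  exact hI.sUnion_mem _ (image_subset_iff.2 hA) (mk_image_le.trans_lt hJ)

theorem le_mk_of_notMem (hI : IsCompleteIdeal κ I) (hX : X ∉ I) (hfine : ∀ x ∈ X, {x} ∈ I) :
    κ ≤ #X := by
  contrapose! hX
  rw [← biUnion_of_singleton X]
  exact hI.biUnion_mem hX hfine

theorem exists_inter_fiber_notMem (hI : IsCompleteIdeal κ I) (hX : X ∉ I) {C : Set γ}
    (hC : #C < κ) {f : α → γ} (hf : MapsTo f X C) : ∃ c ∈ C, X ∩ f ⁻¹' {c} ∉ I := by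
  contrapose! hX
  exact hI.mem_of_subset _ (hI.biUnion_mem hC hX) X fun x hx ↦
    mem_biUnion (hf hx) ⟨hx, rfl⟩

theorem exists_common_color (hI : IsCompleteIdeal κ I) (hX : X ∉ I) {C : Set γ} (hCκ : #C < κ)
    (hJ : ℵ₀ ≤ #J) (hCJ : #C < (#J).ord.cof) {f : ι → α → γ} (hf : ∀ i ∈ J, MapsTo (f i) X C) :
    ∃ c ∈ C, ∃ K ⊆ J, #J ≤ #K ∧ ∀ i ∈ K, X ∩ f i ⁻¹' {c} ∉ I := by
  choose c hcC hc using fun i : J ↦ hI.exists_inter_fiber_notMem hX hCκ (hf i i.2)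
  obtain ⟨a, K, hKJ, hK, hcK⟩ :=
    infinite_pigeonhole_set (fun i ↦ (⟨c i, hcC i⟩ : C)) #J le_rfl hJ hCJ
  refine ⟨a, a.2, K, hKJ, hK, fun i hi ↦ ?_⟩
  rw [← hcK hi]
  exact hc ⟨i, hKJ hi⟩

end IsCompleteIdeal

namespace IsSaturatedIdeal

theorem of_mk_le {K : Set ι} (hsat : IsSaturatedIdeal I X J ν) (hJK : #J ≤ #K) :
    IsSaturatedIdeal I X K ν := by
  intro A hA
  obtain ⟨e⟩ := hJK
  let g : ι → ι := Function.extend Subtype.val (fun j ↦ (e j : ι)) id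
  have hg (j : J) : g j = e j := Subtype.val_injective.extend_apply _ _ j
  have hgJ : MapsTo g J K := fun j hj ↦ hg ⟨j, hj⟩ ▸ (e ⟨j, hj⟩).2
  have hg_inj : InjOn g J :=
    injOn_iff_injective.2 fun i j hij ↦ e.injective <| Subtype.ext <| by simpa [hg] using hij
  obtain ⟨S, hSJ, hS, hST⟩ := hsat (A ∘ g) fun j hj ↦ hA (g j) (hgJ hj)
  refine ⟨g '' S, (hgJ.mono_left hSJ).image_subset,
    (mk_image_eq_of_injOn g S (hg_inj.mono hSJ)).trans hS, fun T hTS hT hTν ↦ ?_⟩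
  obtain ⟨R, hRS, rfl⟩ := subset_image_iff.1 hTS
  rw [mk_image_eq_of_injOn g R (hg_inj.mono (hRS.trans hSJ))] at hTν
  rw [biInter_image]
  exact hST R hRS hT.of_image hTν

-- The factor `X` matters only for `ν = 0`, where the intersection over `S = ∅` is all of `α`.
theorem exists_inter_biInter_notMem (hsat : IsSaturatedIdeal I X J ν) (hX : X ∉ I)
    {A : ι → Set α} (hA : ∀ i ∈ J, A i ⊆ X ∧ A i ∉ I) :
    ∃ S ⊆ J, #S = ν ∧ X ∩ ⋂ i ∈ S, A i ∉ I := by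
  obtain ⟨S, hSJ, hS, hST⟩ := hsat A hA
  refine ⟨S, hSJ, hS, ?_⟩
  rcases S.eq_empty_or_nonempty with rfl | ⟨i, hi⟩
  · simpa using hX
  · rw [inter_eq_right.2 ((biInter_subset_of_mem hi).trans (hA i (hSJ hi)).1)]
    exact hST S subset_rfl ⟨i, hi⟩ hS.le

theorem exists_monochromatic_rectangle (hsat : IsSaturatedIdeal I X J ν)
    (hI : IsCompleteIdeal κ I) (hX : X ∉ I) {C : Set γ} (hCκ : #C < κ) (hJ : ℵ₀ ≤ #J)
    (hCJ : #C < (#J).ord.cof) {f : ι → α → γ} (hf : ∀ i ∈ J, MapsTo (f i) X C) :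
    ∃ H₀ ⊆ J, #H₀ = ν ∧ ∃ H₁ ⊆ X, H₁ ∉ I ∧ ∃ c ∈ C, ∀ i ∈ H₀, ∀ x ∈ H₁, f i x = c := by
  obtain ⟨c, hcC, K, hKJ, hJK, hK⟩ := hI.exists_common_color hX hCκ hJ hCJ hf
  obtain ⟨S, hSK, hS, hSX⟩ := (hsat.of_mk_le hJK).exists_inter_biInter_notMem hX
    fun i hi ↦ ⟨inter_subset_left, hK i hi⟩
  exact ⟨S, hSK.trans hKJ, hS, _, inter_subset_left, hSX, c, hcC,
    fun i hi x hx ↦ (mem_iInter₂.1 hx.2 i hi).2⟩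

end IsSaturatedIdeal

theorem saturated_ideal_implies_polarized_partition_general
    {μ ν κ θ : Cardinal.{u}} (hμκ : μ < κ) (hθ : ℵ₀ ≤ θ) (hμθ : μ < θ.ord.cof)
    {I : Set (Set Ordinal.{u})} (hI : IsCompleteIdeal (lift.{u + 1} κ) I)
    (hfine : ∀ ξ < κ.ord, {ξ} ∈ I) (hproper : Iio κ.ord ∉ I)
    (hsat : IsSaturatedIdeal I (Iio κ.ord) (Iio θ.ord) (lift.{u + 1} ν))
    (f : Ordinal.{u} → Ordinal.{u} → Ordinal.{u})
    (hf : ∀ α < θ.ord, ∀ β < κ.ord, f α β < μ.ord) :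
    ∃ H₀ H₁ : Set Ordinal.{u},
      H₀ ⊆ Iio θ.ord ∧ #H₀ = lift.{u + 1} ν ∧ H₁ ⊆ Iio κ.ord ∧ #H₁ = lift.{u + 1} κ ∧
      Set.Subsingleton {c | ∃ α ∈ H₀, ∃ β ∈ H₁, f α β = c} := by
  obtain ⟨H₀, hH₀, hH₀ν, H₁, hH₁, hH₁I, c, -, hc⟩ :=
    hsat.exists_monochromatic_rectangle (C := Iio μ.ord) hI hproper
      (by simpa) (by simpa) (by simpa [← lift_ord, ← Ordinal.lift_cof]) hf
  have hH₁_card : #H₁ = lift.{u + 1} κ :=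
    le_antisymm ((mk_le_mk_of_subset hH₁).trans_eq (by simp))
      (hI.le_mk_of_notMem hH₁I fun ξ hξ ↦ hfine ξ (hH₁ hξ))
  refine ⟨H₀, H₁, hH₀, hH₀ν, hH₁, hH₁_card, subsingleton_of_forall_eq c ?_⟩
  rintro _ ⟨α, hα, β, hβ, rfl⟩
  exact hc α hα β hβ

/-- If `μ⁺` carries a normal, fine, `μ⁺`-complete proper ideal which is
`(μ⁺⁺, ν, ν)`-saturated (for some nonzero `ν ≤ μ`), then the polarized partition
relation `(μ⁺⁺, μ⁺) → (ν, μ⁺)_μ` holds. -/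
theorem saturated_ideal_implies_polarized_partition
    (μ ν : Cardinal.{0}) (hμ : ℵ₀ ≤ μ) (hν0 : ν ≠ 0) (hνμ : ν ≤ μ)
    (I : Set (Set Ordinal.{0}))
    -- members of `I` are subsets of `μ⁺`
    (hIsub : ∀ A ∈ I, A ⊆ Set.Iio (Order.succ μ).ord)
    -- `I` is closed under subsets
    (hdown : ∀ A ∈ I, ∀ B ⊆ A, B ∈ I)
    -- `I` is `μ⁺`-complete
    (hcomplete : ∀ S : Set (Set Ordinal), S ⊆ I →
      #S < Cardinal.lift.{1} (Order.succ μ) → ⋃₀ S ∈ I)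
    -- `I` is fine
    (hfine : ∀ ξ < (Order.succ μ).ord, ({ξ} : Set Ordinal) ∈ I)
    -- `I` is proper
    (hproper : Set.Iio (Order.succ μ).ord ∉ I)
    -- `I` is normal: diagonal unions of members of `I` are in `I`
    (hnormal : ∀ A : Ordinal → Set Ordinal,
      (∀ ξ < (Order.succ μ).ord, A ξ ∈ I) →
      {α : Ordinal | α < (Order.succ μ).ord ∧ ∃ ξ < α, α ∈ A ξ} ∈ I)
    -- `I` is `(μ⁺⁺, ν, ν)`-saturated
    (hsat : ∀ A : Ordinal → Set Ordinal,
      (∀ i < (Order.succ (Order.succ μ)).ord,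
        A i ⊆ Set.Iio (Order.succ μ).ord ∧ A i ∉ I) →
      ∃ S : Set Ordinal, S ⊆ Set.Iio (Order.succ (Order.succ μ)).ord ∧
        #S = Cardinal.lift.{1} ν ∧
        ∀ T ⊆ S, T.Nonempty → #T ≤ Cardinal.lift.{1} ν → (⋂ i ∈ T, A i) ∉ I) :
    ∀ f : Ordinal → Ordinal → Ordinal,
      (∀ α < (Order.succ (Order.succ μ)).ord, ∀ β < (Order.succ μ).ord, f α β < μ.ord) →
      ∃ H₀ H₁ : Set Ordinal,
        H₀ ⊆ Set.Iio (Order.succ (Order.succ μ)).ord ∧ #H₀ = Cardinal.lift.{1} ν ∧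
        H₁ ⊆ Set.Iio (Order.succ μ).ord ∧ #H₁ = Cardinal.lift.{1} (Order.succ μ) ∧
        Set.Subsingleton {c : Ordinal | ∃ α ∈ H₀, ∃ β ∈ H₁, f α β = c} := by
  have hθ : (Order.succ (Order.succ μ)).IsRegular := isRegular_succ (hμ.trans (Order.le_succ μ))
  exact saturated_ideal_implies_polarized_partition_general (Order.lt_succ μ) hθ.aleph0_le
    (hθ.cof_ord.symm ▸ (Order.lt_succ μ).trans (Order.lt_succ _)) ⟨hdown, hcomplete⟩
    hfine hproper hsat
end

section
/- Let μ be an infinite cardinal. Suppose there is a Kurepa family on μ⁺, i.e., a family ⟨A_i : i < μ⁺⁺⟩ of pairwise distinct subsets of μ⁺ such that for every β < μ⁺ the set of traces {A_i ∩ β : i < μ⁺⁺} has cardinality at most μ (such a family is given by the branches of a Kurepa tree on μ⁺). Then the negative polarized partition relation (μ⁺⁺, μ⁺) ↛ (2, μ⁺)_μ holds: there is a function f : μ⁺⁺ × μ⁺ → μ such that for all distinct i, j < μ⁺⁺ and every H₁ ⊆ μ⁺ with |H₁| = μ⁺, f takes at least two values on {i, j} × H₁. -/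
open Cardinal Set

/-!
Color `(i, β)` by the trace `A i ∩ β`, which takes at most `μ` values for each fixed `β`.
Distinct sets `A i` and `A j` differ at some `δ`, so `(i, β)` and `(j, β)` have different colors
as soon as `β > δ`; a set of indices `β` of full cardinality contains such a `β`.
-/

universe u v

theorem exists_mapsTo_injOn_of_lift_mk_le {α : Type u} {β : Type v} [Nonempty β] {s : Set α}
    {t : Set β} (h : lift.{v} #s ≤ lift.{u} #t) : ∃ f : α → β, MapsTo f s t ∧ InjOn f s := by
  obtain ⟨e⟩ := lift_mk_le'.1 h
  obtain ⟨f, hf⟩ : ∃ f : α → β, ∀ x : s, f x = e x :=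
    ⟨Function.extend Subtype.val (fun x ↦ (e x : β)) fun _ ↦ Classical.arbitrary β,
      Subtype.val_injective.extend_apply _ _⟩
  refine ⟨f, fun x hx ↦ hf ⟨x, hx⟩ ▸ (e ⟨x, hx⟩).2, injOn_iff_injective.2 fun x y hxy ↦ ?_⟩
  exact e.injective (Subtype.ext ((hf x).symm.trans (hxy.trans (hf y))))

theorem eq_of_forall_inter_Iio_eq {α : Type*} [Preorder α] {s t H : Set α}
    (hH : ∀ x ∈ s ∪ t, ∃ β ∈ H, x < β) (h : ∀ β ∈ H, s ∩ Iio β = t ∩ Iio β) : s = t := by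
  ext x
  constructor
  · intro hx
    obtain ⟨β, hβ, hxβ⟩ := hH x (.inl hx)
    exact ((h β hβ).subset ⟨hx, hxβ⟩).1
  · intro hx
    obtain ⟨β, hβ, hxβ⟩ := hH x (.inr hx)
    exact ((h β hβ).superset ⟨hx, hxβ⟩).1

theorem exists_lt_of_lift_le_mk {κ : Cardinal.{u}} (hκ : ℵ₀ ≤ κ) {H : Set Ordinal.{u}}
    (hH : lift.{u + 1} κ ≤ #H) {δ : Ordinal.{u}} (hδ : δ < κ.ord) : ∃ β ∈ H, δ < β := by
  by_contra! hHδ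
  have hδκ : (Order.succ δ).card < κ := lt_ord.1 ((isSuccLimit_ord hκ).succ_lt hδ)
  have hsub : H ⊆ Iio (Order.succ δ) := fun β hβ ↦ Order.lt_succ_of_le (hHδ β hβ)
  have hcard : lift.{u + 1} κ ≤ lift.{u + 1} (Order.succ δ).card :=
    hH.trans ((mk_le_mk_of_subset hsub).trans_eq (mk_Iio_ordinal _))
  exact hδκ.not_ge (lift_le.1 hcard)

/-- A Kurepa family `⟨A i : i ∈ I⟩` on `κ`: distinct subsets of `κ` with at most `μ` traces on
each `β < κ`. The cardinal `κ` is identified with the set `Iio κ.ord` of ordinals, and no lower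
bound on the size of `I` is imposed; the usual notion on `μ⁺` is `κ = μ⁺`, `I = μ⁺⁺`. -/
structure IsKurepaFamily {ι : Type*} (I : Set ι) (A : ι → Set Ordinal.{u})
    (κ μ : Cardinal.{u}) : Prop where
  subset : ∀ i ∈ I, A i ⊆ Iio κ.ord
  injOn : InjOn A I
  mk_traces_le : ∀ β < κ.ord, #((A · ∩ Iio β) '' I) ≤ lift.{u + 1} μ

theorem IsKurepaFamily.eq_of_forall_trace_eq {ι : Type*} {I : Set ι} {A : ι → Set Ordinal.{u}}
    {κ μ : Cardinal.{u}} (hA : IsKurepaFamily I A κ μ) (hκ : ℵ₀ ≤ κ) {i j : ι} (hi : i ∈ I)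
    (hj : j ∈ I) {H : Set Ordinal.{u}} (hH : lift.{u + 1} κ ≤ #H)
    (h : ∀ β ∈ H, A i ∩ Iio β = A j ∩ Iio β) : i = j :=
  hA.injOn hi hj <| eq_of_forall_inter_Iio_eq
    (fun _ hx ↦ exists_lt_of_lift_le_mk hκ hH (union_subset (hA.subset i hi) (hA.subset j hj) hx)) h

theorem IsKurepaFamily.exists_trace_coloring {ι : Type*} {I : Set ι} {A : ι → Set Ordinal.{u}}
    {κ μ : Cardinal.{u}} (hA : IsKurepaFamily I A κ μ) :
    ∃ g : Ordinal.{u} → Set Ordinal.{u} → Ordinal.{u}, ∀ β < κ.ord,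
      MapsTo (g β) ((A · ∩ Iio β) '' I) (Iio μ.ord) ∧ InjOn (g β) ((A · ∩ Iio β) '' I) := by
  choose! g hg using fun β (hβ : β < κ.ord) ↦
    exists_mapsTo_injOn_of_lift_mk_le (s := (A · ∩ Iio β) '' I) (t := Iio μ.ord)
      (by simpa only [mk_Iio_ordinal, card_ord, lift_id] using hA.mk_traces_le β hβ)
  exact ⟨g, hg⟩

theorem kurepa_family_implies_negative_polarized_partition_general {ι : Type*} {I : Set ι}
    {A : ι → Set Ordinal.{u}} {κ μ : Cardinal.{u}} (hA : IsKurepaFamily I A κ μ) (hκ : ℵ₀ ≤ κ) :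
    ∃ f : ι → Ordinal.{u} → Ordinal.{u},
      (∀ i ∈ I, ∀ β < κ.ord, f i β < μ.ord) ∧
      ∀ i ∈ I, ∀ j ∈ I, i ≠ j →
        ∀ H ⊆ Iio κ.ord, #H = lift.{u + 1} κ → ¬ (image2 f {i, j} H).Subsingleton := by
  obtain ⟨g, hg⟩ := hA.exists_trace_coloring
  refine ⟨fun i β ↦ g β (A i ∩ Iio β), fun i hi β hβ ↦ (hg β hβ).1 (mem_image_of_mem _ hi), ?_⟩
  intro i hi j hj hij H hHκ hH hsub
  refine hij (hA.eq_of_forall_trace_eq hκ hi hj hH.ge fun β hβ ↦ ?_)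
  have hcolor : g β (A i ∩ Iio β) = g β (A j ∩ Iio β) :=
    hsub ⟨i, mem_insert _ _, β, hβ, rfl⟩ ⟨j, mem_insert_of_mem _ rfl, β, hβ, rfl⟩
  exact (hg β (hHκ hβ)).2 (mem_image_of_mem _ hi) (mem_image_of_mem _ hj) hcolor

/-- If there is a Kurepa family on `μ⁺` (a family of `μ⁺⁺` pairwise distinct subsets of
`μ⁺` all of whose trace sets at levels `β < μ⁺` have cardinality at most `μ`), then the
negative polarized partition relation `(μ⁺⁺, μ⁺) ↛ (2, μ⁺)_μ` holds. -/
theorem kurepa_family_implies_negative_polarized_partition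
    (μ : Cardinal.{0}) (hμ : ℵ₀ ≤ μ)
    (A : Ordinal.{0} → Set Ordinal.{0})
    -- each `A i` is a subset of `μ⁺`
    (hA : ∀ i < (Order.succ (Order.succ μ)).ord, A i ⊆ Set.Iio (Order.succ μ).ord)
    -- the `A i` are pairwise distinct
    (hinj : ∀ i < (Order.succ (Order.succ μ)).ord, ∀ j < (Order.succ (Order.succ μ)).ord,
      A i = A j → i = j)
    -- for every `β < μ⁺` there are at most `μ` many traces `A i ∩ β`
    (htrace : ∀ β < (Order.succ μ).ord,
      #{s : Set Ordinal | ∃ i < (Order.succ (Order.succ μ)).ord, s = A i ∩ Set.Iio β}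
        ≤ Cardinal.lift.{1} μ) :
    ∃ f : Ordinal → Ordinal → Ordinal,
      (∀ α < (Order.succ (Order.succ μ)).ord, ∀ β < (Order.succ μ).ord, f α β < μ.ord) ∧
      ∀ i < (Order.succ (Order.succ μ)).ord, ∀ j < (Order.succ (Order.succ μ)).ord,
        i ≠ j →
        ∀ H₁ ⊆ Set.Iio (Order.succ μ).ord, #H₁ = Cardinal.lift.{1} (Order.succ μ) →
          ¬ Set.Subsingleton
            {c : Ordinal | ∃ a ∈ ({i, j} : Set Ordinal), ∃ β ∈ H₁, f a β = c} := by
  have hKurepa : IsKurepaFamily (Iio (Order.succ (Order.succ μ)).ord) A (Order.succ μ) μ :=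
    ⟨hA, fun i hi j hj ↦ hinj i hi j hj, by simpa only [image, mem_Iio, eq_comm] using htrace⟩
  exact kurepa_family_implies_negative_polarized_partition_general hKurepa
    (hμ.trans (Order.le_succ μ))
end

section
/- Let μ < λ be infinite cardinals and let Z = {x ⊆ λ⁺ : |x| = μ⁺}. Suppose there is a normal, fine, μ⁺-complete, λ-centered proper ideal I on Z. Then Tr_Chr(λ⁺, μ⁺) holds: every graph whose vertex set has cardinality λ⁺ and whose chromatic number is λ⁺ has an induced subgraph on a set of μ⁺ vertices whose chromatic number is μ⁺. -/
open Cardinal Set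

/-- `G` has a proper coloring using `κ` colors. -/
def CardColorable {V : Type*} (G : SimpleGraph V) (κ : Cardinal.{0}) : Prop :=
  ∃ c : V → Ordinal.{0}, (∀ v, c v < κ.ord) ∧ ∀ u v : V, G.Adj u v → c u ≠ c v

/-- `κ` is the chromatic number of `G`: `G` is colorable with `κ` colors but with no
smaller number of colors. -/
def HasChromaticNumber {V : Type*} (G : SimpleGraph V) (κ : Cardinal.{0}) : Prop :=
  CardColorable G κ ∧ ∀ κ' < κ, ¬ CardColorable G κ'

/-!
Index induced subgraphs `s i` on at most `μ⁺` vertices by the points `i` of a `μ⁺`-complete ideal,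
read through its dual filter, and suppose that each of them has a `μ`-coloring; fix one. For a fixed
vertex `v`, by fineness and completeness, some color `b v` is given to `v` by positively many of
these colorings; let `a v` be a piece of the linking cover containing that positive set. If `u` and
`v` have the same `a` and `b`, then by linkedness a single one of the fixed colorings is defined at
both and gives them the same color, so `u` and `v` are not adjacent. Thus `v ↦ (a v, b v)` is a
proper coloring of the whole graph with `λ · μ = λ` colors. So if the graph is not `λ`-colorable,
some `s i` is not `μ`-colorable, and having at most `μ⁺` vertices it has exactly `μ⁺` of them and
chromatic number `μ⁺`.
-/

universe u v w

section CardColorable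

variable {V : Type v} {G : SimpleGraph V} {κ : Cardinal.{0}}

theorem CardColorable.of_coloring {C : Type u} (K : G.Coloring C)
    (hC : #C ≤ Cardinal.lift.{u} κ) : CardColorable G κ := by
  have hle : Cardinal.lift.{1} #C ≤ Cardinal.lift.{u} #(Iio κ.ord) := by
    simpa [Cardinal.mk_Iio_ordinal] using Cardinal.lift_le.{1}.2 hC
  obtain ⟨f⟩ := Cardinal.lift_mk_le'.1 hle
  exact ⟨fun v => f (K v), fun v => (f (K v)).2,
    fun u v huv h => K.valid huv (f.injective (Subtype.ext h))⟩

theorem CardColorable.nonempty_coloring (h : CardColorable G κ) :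
    Nonempty (G.Coloring (Iio κ.ord)) := by
  obtain ⟨c, hlt, hadj⟩ := h
  exact ⟨.mk (fun v => ⟨c v, hlt v⟩) fun huv h => hadj _ _ huv (congrArg Subtype.val h)⟩

theorem CardColorable.mono {κ' : Cardinal.{0}} (hκ : κ ≤ κ') (h : CardColorable G κ) :
    CardColorable G κ' := by
  obtain ⟨c, hlt, hadj⟩ := h
  exact ⟨c, fun v => (hlt v).trans_le (Cardinal.ord_le_ord.2 hκ), hadj⟩

theorem cardColorable_of_mk_le (hV : #V ≤ Cardinal.lift.{v} κ) : CardColorable G κ :=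
  .of_coloring G.selfColoring hV

theorem hasChromaticNumber_succ (hV : #V ≤ Cardinal.lift.{v} (Order.succ κ))
    (hG : ¬ CardColorable G κ) : HasChromaticNumber G (Order.succ κ) :=
  ⟨cardColorable_of_mk_le hV, fun _ hlt h => hG (h.mono (Order.lt_succ_iff.1 hlt))⟩

theorem mk_eq_succ_of_not_cardColorable (hV : #V ≤ Cardinal.lift.{v} (Order.succ κ))
    (hG : ¬ CardColorable G κ) : #V = Cardinal.lift.{v} (Order.succ κ) := by
  refine hV.antisymm ?_
  rw [Cardinal.lift_succ, Order.succ_le_iff]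
  exact not_le.1 fun hle => hG (cardColorable_of_mk_le hle)

end CardColorable

section LinkedFilter

variable {ι : Type u} {l : Filter ι} {κ : Cardinal.{u}}

theorem exists_frequently_of_eventually_exists [l.NeBot] [CardinalInterFilter l κ] {C : Type u}
    (hC : #C < κ) {p : ι → C → Prop} (h : ∀ᶠ i in l, ∃ c, p i c) : ∃ c, ∃ᶠ i in l, p i c := by
  by_contra! hnot
  have hnone : ∀ᶠ i in l, ∀ c, ¬ p i c := (Filter.eventually_cardinal_forall hC).2 hnot
  obtain ⟨i, ⟨c, hc⟩, hi⟩ := (h.and hnone).exists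
  exact hi c hc

/-- The `l`-positive sets (those whose complement is not in `l`) are covered by pieces indexed by
`Λ`, any two members of a common piece having `l`-positive intersection. This is `#Λ`-linkedness,
the two-set version of `#Λ`-centeredness, of the ideal dual to `l`. -/
def IsLinkedFilter (l : Filter ι) (Λ : Type w) : Prop :=
  ∃ P : Λ → Set (Set ι), (∀ A, (∃ᶠ i in l, i ∈ A) → ∃ a, A ∈ P a) ∧
    ∀ a, ∀ A ∈ P a, ∀ B ∈ P a, ∃ᶠ i in l, i ∈ A ∩ B

variable {V : Type v} {G : SimpleGraph V} {s : ι → Set V}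

theorem IsLinkedFilter.nonempty_coloring_prod [l.NeBot] [CardinalInterFilter l κ] {Λ : Type w}
    {C : Type u} (hl : IsLinkedFilter l Λ) (hC : #C < κ) (hs : ∀ v, ∀ᶠ i in l, v ∈ s i)
    (K : ∀ i, (G.induce (s i)).Coloring C) : Nonempty (G.Coloring (Λ × C)) := by
  obtain ⟨P, hcover, hlinked⟩ := hl
  have hpos (v : V) : ∃ c, ∃ᶠ i in l, ∃ hv : v ∈ s i, K i ⟨v, hv⟩ = c :=
    exists_frequently_of_eventually_exists hC ((hs v).mono fun _ hv => ⟨_, hv, rfl⟩)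
  choose b hb using hpos
  choose a ha using fun v => hcover _ (hb v)
  refine ⟨.mk (fun v => (a v, b v)) fun {u v} huv heq => ?_⟩
  obtain ⟨hab, hbb⟩ := Prod.mk.inj heq
  obtain ⟨i, ⟨hu, hKu⟩, ⟨hv, hKv⟩⟩ := (hlinked (a v) _ (hab ▸ ha u) _ (ha v)).exists
  have hadj : (G.induce (s i)).Adj ⟨u, hu⟩ ⟨v, hv⟩ := huv
  exact (K i).valid hadj (hKu.trans (hbb.trans hKv.symm))

end LinkedFilter

theorem mk_Iio_ord_prod {μ lam : Cardinal.{u}} (hμ : ℵ₀ ≤ μ) (hle : μ ≤ lam) :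
    #(Iio lam.ord × Iio μ.ord) = Cardinal.lift.{u + 1} lam := by
  have hmul : lam * μ = lam :=
    Cardinal.mul_eq_left (hμ.trans hle) hle (Cardinal.aleph0_pos.trans_le hμ).ne'
  rw [Cardinal.mk_prod, Cardinal.lift_id, Cardinal.lift_id, Cardinal.mk_Iio_ordinal,
    Cardinal.mk_Iio_ordinal, Cardinal.card_ord, Cardinal.card_ord, ← Cardinal.lift_mul, hmul]

theorem IsLinkedFilter.exists_not_cardColorable_induce {ι : Type 1} {l : Filter ι}
    {V : Type v} {G : SimpleGraph V} {s : ι → Set V} {μ lam : Cardinal.{0}} [l.NeBot]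
    [CardinalInterFilter l (Cardinal.lift.{1} (Order.succ μ))]
    (hl : IsLinkedFilter l (Iio lam.ord)) (hμ : ℵ₀ ≤ μ) (hle : μ ≤ lam)
    (hs : ∀ v, ∀ᶠ i in l, v ∈ s i) (hG : ¬ CardColorable G lam) :
    ∃ i, ¬ CardColorable (G.induce (s i)) μ := by
  by_contra! hcol
  have hlt : #(Iio μ.ord) < Cardinal.lift.{1} (Order.succ μ) := by
    rw [Cardinal.mk_Iio_ordinal, Cardinal.card_ord]
    exact Cardinal.lift_lt.2 (Order.lt_succ μ)
  obtain ⟨K⟩ := hl.nonempty_coloring_prod hlt hs fun i => (hcol i).nonempty_coloring.some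
  exact hG (.of_coloring K (mk_Iio_ord_prod hμ hle).le)

section Ideal

variable {α : Type u} {Z : Set α} {I : Set (Set α)} {κ : Cardinal.{u}}

/-- `I` is a proper `κ`-complete ideal of subsets of `Z`. -/
structure IsCompleteIdealOn (Z : Set α) (I : Set (Set α)) (κ : Cardinal.{u}) : Prop where
  subset_of_mem : ∀ A ∈ I, A ⊆ Z
  mem_of_subset : ∀ A ∈ I, ∀ B ⊆ A, B ∈ I
  notMem : Z ∉ I
  sUnion_mem : ∀ S ⊆ I, #S < κ → ⋃₀ S ∈ I

/-- The ideal `I` on `Z` is `#Λ`-linked: its positive sets are covered by pieces indexed by `Λ`, any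
two members of a common piece having positive intersection. -/
def IsLinkedIdealOn (Z : Set α) (I : Set (Set α)) (Λ : Type w) : Prop :=
  ∃ P : Λ → Set (Set α), (∀ A ⊆ Z, A ∉ I → ∃ a, A ∈ P a) ∧
    ∀ a, ∀ A ∈ P a, ∀ B ∈ P a, A ∩ B ∉ I

theorem isLinkedIdealOn_of_centered {o : Ordinal.{w}} {P : Ordinal.{w} → Set (Set α)}
    (hcover : ∀ A, A ⊆ Z → A ∉ I → ∃ c < o, A ∈ P c)
    (hcentered : ∀ c < o, ∀ F : Finset (Set α), ↑F ⊆ P c → F.Nonempty →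
      ⋂₀ (F : Set (Set α)) ∉ I) :
    IsLinkedIdealOn Z I (Iio o) := by
  classical
  refine ⟨fun c => P c, fun A hAZ hA => ?_, fun c A hA B hB => ?_⟩
  · obtain ⟨c, hc, hAc⟩ := hcover A hAZ hA
    exact ⟨⟨c, hc⟩, hAc⟩
  · simpa using hcentered c c.2 {A, B} (by simp [Set.insert_subset_iff, hA, hB]) (by simp)

namespace IsCompleteIdealOn

/-- The filter of complements of members of a `κ`-complete ideal on `Z`, as a filter on the subtype
`Z`. -/
def dualFilter (hI : IsCompleteIdealOn Z I κ) (hκ : 2 < κ) : Filter Z :=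
  Filter.ofCardinalUnion {A | Subtype.val '' A ∈ I} hκ
    (fun S hS hSI => by
      rw [mem_ofPred_eq, image_sUnion]
      exact hI.sUnion_mem _ (image_subset_iff.2 hSI) (Cardinal.mk_image_le.trans_lt hS))
    fun _ hA _ hBA => hI.mem_of_subset _ hA _ (image_mono hBA)

variable (hI : IsCompleteIdealOn Z I κ) (hκ : 2 < κ)

instance cardinalInterFilter_dualFilter : CardinalInterFilter (hI.dualFilter hκ) κ :=
  Filter.cardinalInter_ofCardinalUnion ..

theorem eventually_dualFilter {p : Z → Prop} :
    (∀ᶠ x in hI.dualFilter hκ, p x) ↔ Subtype.val '' {x | ¬ p x} ∈ I :=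
  Iff.rfl

theorem frequently_dualFilter {p : Z → Prop} :
    (∃ᶠ x in hI.dualFilter hκ, p x) ↔ Subtype.val '' {x | p x} ∉ I := by
  simp only [Filter.Frequently, eventually_dualFilter, not_not]

instance neBot_dualFilter : (hI.dualFilter hκ).NeBot := by
  rw [← Filter.frequently_true_iff_neBot, frequently_dualFilter]
  simpa using hI.notMem

theorem isLinkedFilter_dualFilter {Λ : Type w} (hlinked : IsLinkedIdealOn Z I Λ) :
    IsLinkedFilter (hI.dualFilter hκ) Λ := by
  obtain ⟨P, hcover, hinter⟩ := hlinked
  refine ⟨fun a => {A | Subtype.val '' A ∈ P a}, fun A hA => ?_, fun a A hA B hB => ?_⟩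
  · exact hcover _ (Subtype.coe_image_subset Z A) ((frequently_dualFilter hI hκ).1 hA)
  · rw [frequently_dualFilter]
    exact image_inter Subtype.val_injective ▸ hinter a _ hA _ hB

end IsCompleteIdealOn

end Ideal

theorem centered_ideal_implies_chromatic_transfer_general {μ lam κ : Cardinal.{0}} (hμ : ℵ₀ ≤ μ)
    (hle : μ ≤ lam) {Z : Set (Set Ordinal.{0})} {I : Set (Set (Set Ordinal.{0}))}
    (hZ : ∀ x ∈ Z, #x ≤ Cardinal.lift.{1} (Order.succ μ))
    (hI : IsCompleteIdealOn Z I (Cardinal.lift.{1} (Order.succ μ)))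
    (hfine : ∀ α < κ.ord, {x ∈ Z | α ∉ x} ∈ I) (hlinked : IsLinkedIdealOn Z I (Iio lam.ord))
    {V : Type} {G : SimpleGraph V} (hV : #V ≤ κ) (hG : ¬ CardColorable G lam) :
    ∃ W : Set V, #W = Order.succ μ ∧ HasChromaticNumber (G.induce W) (Order.succ μ) := by
  have htwo : 2 < Cardinal.lift.{1} (Order.succ μ) := by
    simpa using (Cardinal.natCast_lt_aleph0 (n := 2)).trans (hμ.trans_lt (Order.lt_succ μ))
  obtain ⟨f⟩ : Nonempty (V ↪ Iio κ.ord) := by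
    simpa [← Cardinal.lift_mk_le', Cardinal.mk_Iio_ordinal] using hV
  let s (x : Z) : Set V := (fun v => (f v : Ordinal)) ⁻¹' x
  have hs (v : V) : ∀ᶠ x in hI.dualFilter htwo, v ∈ s x := by
    rw [hI.eventually_dualFilter]
    convert hfine (f v) (f v).2 using 1
    ext x
    simp [s, and_comm]
  have hcard (x : Z) : #(s x) ≤ Order.succ μ := by
    have hpre := Cardinal.mk_preimage_of_injective_lift _ (x : Set Ordinal)
      (Subtype.val_injective.comp f.injective)
    rw [Cardinal.lift_id'.{0, 1}] at hpre
    exact Cardinal.lift_le.1 (hpre.trans (hZ x x.2))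
  obtain ⟨x, hx⟩ :=
    (hI.isLinkedFilter_dualFilter htwo hlinked).exists_not_cardColorable_induce hμ hle hs hG
  exact ⟨s x, by simpa using mk_eq_succ_of_not_cardColorable (by simpa using hcard x) hx,
    hasChromaticNumber_succ (by simpa using hcard x) hx⟩

/-- If `[λ⁺]^{μ⁺}` carries a normal, fine, `μ⁺`-complete, `λ`-centered proper ideal, then
`Tr_Chr(λ⁺, μ⁺)` holds: every graph of size and chromatic number `λ⁺` has an induced
subgraph on `μ⁺` vertices of chromatic number `μ⁺`. -/
theorem centered_ideal_implies_chromatic_transfer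
    (μ lam : Cardinal.{0}) (hμ : ℵ₀ ≤ μ) (hlt : μ < lam)
    (Z : Set (Set Ordinal.{0}))
    (hZ : Z = {x : Set Ordinal | x ⊆ Set.Iio (Order.succ lam).ord ∧
      #x = Cardinal.lift.{1} (Order.succ μ)})
    (I : Set (Set (Set Ordinal.{0})))
    -- members of `I` are subsets of `Z`
    (hIsub : ∀ A ∈ I, A ⊆ Z)
    -- `I` is closed under subsets
    (hdown : ∀ A ∈ I, ∀ B ⊆ A, B ∈ I)
    -- `I` is proper
    (hproper : Z ∉ I)
    -- `I` is `μ⁺`-complete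
    (hcomplete : ∀ S : Set (Set (Set Ordinal)), S ⊆ I →
      #S < Cardinal.lift.{1} (Order.succ μ) → ⋃₀ S ∈ I)
    -- `I` is fine
    (hfine : ∀ α < (Order.succ lam).ord, {x ∈ Z | α ∉ x} ∈ I)
    -- `I` is normal
    (hnormal : ∀ A : Ordinal → Set (Set Ordinal),
      (∀ α < (Order.succ lam).ord, A α ∈ I) →
      {x ∈ Z | ∃ α ∈ x, x ∈ A α} ∈ I)
    -- `I` is `λ`-centered
    (hcentered : ∃ P : Ordinal.{0} → Set (Set (Set Ordinal)),
      (∀ c < lam.ord, P c ⊆ {A | A ⊆ Z ∧ A ∉ I}) ∧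
      (∀ A, A ⊆ Z → A ∉ I → ∃ c < lam.ord, A ∈ P c) ∧
      (∀ c < lam.ord, ∀ F : Finset (Set (Set Ordinal)),
        ↑F ⊆ P c → F.Nonempty → ⋂₀ (F : Set (Set (Set Ordinal))) ∉ I)) :
    ∀ (V : Type) (G : SimpleGraph V), #V = Order.succ lam →
      HasChromaticNumber G (Order.succ lam) →
      ∃ W : Set V, #W = Order.succ μ ∧
        HasChromaticNumber (G.induce W) (Order.succ μ) := by
  obtain ⟨P, -, hcover, hinter⟩ := hcentered
  exact fun V G hV hG => centered_ideal_implies_chromatic_transfer_general hμ hlt.le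
    (fun _ hx => (hZ.subset hx).2.le) ⟨hIsub, hdown, hproper, hcomplete⟩ hfine
    (isLinkedIdealOn_of_centered hcover hinter) hV.le (hG.2 lam (Order.lt_succ lam))
end

section
/- Let μ be an infinite cardinal with 2^μ = μ⁺. Then the negative polarized partition relation (μ⁺, μ) ↛ (μ⁺, μ)_2 holds: there is a function f : μ⁺ × μ → 2 such that for every H₀ ⊆ μ⁺ with |H₀| = μ⁺ and every H₁ ⊆ μ with |H₁| = μ, f takes both values 0 and 1 on H₀ × H₁. -/
open Cardinal Set

/-!
Since `(μ⁺)^μ = 2^μ = μ⁺`, the subsets of `μ⁺` of size `μ` can be enumerated along `μ⁺`. At stage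
`α < μ⁺` at most `μ` of them have been enumerated, so distinct representatives can be chosen for
all pairs of such a set and a colour. Colouring the row `α` accordingly makes every colour occur
in every set enumerated so far. A set `H₀` of `μ⁺` rows is unbounded in `μ⁺`, so it contains a row
`α` such that a given `H₁` has been enumerated by stage `α`, and in that row every colour occurs
on `H₁`.
-/

universe u

theorem exists_injective_mem_of_mk_Iio_lt {J B : Type u} [LinearOrder J] [WellFoundedLT J]
    (S : J → Set B) (hS : ∀ j, #(Iio j) < #(S j)) :
    ∃ h : J → B, Function.Injective h ∧ ∀ j, h j ∈ S j := by
  have exists_new (j : J) (F : ∀ k < j, B) : ∃ x ∈ S j, ∀ k hk, F k hk ≠ x := by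
    have hF : #(range fun k : Iio j ↦ F k.1 k.2) < #(S j) := mk_range_le.trans_lt (hS j)
    obtain ⟨x, hxS, hxF⟩ := sdiff_nonempty_of_mk_lt_mk hF
    exact ⟨x, hxS, fun k hk hkx ↦ hxF ⟨⟨k, hk⟩, hkx⟩⟩
  choose new new_mem new_ne using exists_new
  let h : J → B := WellFoundedLT.fix new
  have h_eq (j : J) : h j = new j fun k _ ↦ h k := WellFoundedLT.fix_eq new j
  refine ⟨h, Function.Injective.of_lt_imp_ne fun k j hkj ↦ ?_, fun j ↦ ?_⟩
  · rw [h_eq j]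
    exact new_ne j (fun k _ ↦ h k) k hkj
  · rw [h_eq j]
    exact new_mem j fun k _ ↦ h k

theorem exists_injective_mem_of_mk_le {J B : Type u} (S : J → Set B) (hS : ∀ j, #J ≤ #(S j)) :
    ∃ h : J → B, Function.Injective h ∧ ∀ j, h j ∈ S j := by
  obtain ⟨_, _, hJ⟩ := exists_ord_eq_type_lt J
  exact exists_injective_mem_of_mk_Iio_lt S fun j ↦ (mk_Iio_lt j hJ).trans_le (hS j)

theorem exists_coloring_surjOn {I B C : Type u} [Nonempty C] {μ : Cardinal.{u}} (hμ : ℵ₀ ≤ μ)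
    (hI : #I ≤ μ) (hC : #C ≤ μ) (S : I → Set B) (hS : ∀ i, μ ≤ #(S i)) :
    ∃ g : B → C, ∀ i, SurjOn g (S i) univ := by
  have hIC : #(I × C) ≤ μ := by
    rw [← mul_def]
    exact mul_le_of_le hμ hI hC
  obtain ⟨h, h_inj, h_mem⟩ :=
    exists_injective_mem_of_mk_le (fun p : I × C ↦ S p.1) fun p ↦ hIC.trans (hS p.1)
  refine ⟨Function.extend h Prod.snd fun _ ↦ Classical.arbitrary C, fun i c _ ↦ ?_⟩
  exact ⟨h (i, c), h_mem (i, c), h_inj.extend_apply _ _ _⟩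

theorem exists_rel_mk_fibers_lt_of_mk_le {A I : Type u} {κ : Cardinal.{u}} (hκ : ℵ₀ ≤ κ)
    (hA : #A ≤ κ) (hI : #I ≤ κ) :
    ∃ r : A → I → Prop, (∀ a, #{i | r a i} < κ) ∧ ∀ i, #{a | ¬ r a i} < κ := by
  induction κ using Cardinal.inductionOn with | _ K
  have : Infinite K := infinite_iff.2 hκ
  obtain ⟨φ⟩ := hA
  obtain ⟨ψ⟩ := hI
  obtain ⟨r, hr_compl, hr⟩ := exists_rel_mk_fibers_lt K
  refine ⟨fun a i ↦ r (ψ i) (φ a), fun a ↦ ?_, fun i ↦ ?_⟩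
  · exact (mk_preimage_of_injective ψ {k | r k (φ a)} ψ.injective).trans_lt (hr (φ a))
  · exact (mk_preimage_of_injective φ {k | ¬ r (ψ i) k} φ.injective).trans_lt (hr_compl (ψ i))

theorem exists_coloring_surjOn_of_family {A B C I : Type u} [Nonempty C] {μ : Cardinal.{u}}
    (hμ : ℵ₀ ≤ μ) (hA : #A ≤ Order.succ μ) (hC : #C ≤ μ) (hI : #I ≤ Order.succ μ)
    (S : I → Set B) (hS : ∀ i, μ ≤ #(S i)) :
    ∃ f : A → B → C, ∀ H : Set A, μ < #H → ∀ i, ∃ a ∈ H, SurjOn (f a) (S i) univ := by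
  obtain ⟨r, hr, hr_compl⟩ :=
    exists_rel_mk_fibers_lt_of_mk_le (hμ.trans (Order.le_succ μ)) hA hI
  have exists_row (a : A) : ∃ g : B → C, ∀ i : {i | r a i}, SurjOn g (S i) univ :=
    exists_coloring_surjOn hμ (Order.lt_succ_iff.1 (hr a)) hC _ fun i ↦ hS i
  choose f hf using exists_row
  refine ⟨f, fun H hH i ↦ ?_⟩
  obtain ⟨a, ha, hai⟩ :=
    sdiff_nonempty_of_mk_lt_mk ((Order.lt_succ_iff.1 (hr_compl i)).trans_lt hH)
  exact ⟨a, ha, hf a ⟨i, not_not.1 hai⟩⟩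

theorem exists_coloring_surjOn_of_power_le {A B C : Type u} [Nonempty C] {μ : Cardinal.{u}}
    (hμ : ℵ₀ ≤ μ) (hA : #A ≤ Order.succ μ) (hB : #B ^ μ ≤ Order.succ μ) (hC : #C ≤ μ) :
    ∃ f : A → B → C, ∀ H₀ : Set A, μ < #H₀ → ∀ H₁ : Set B, μ ≤ #H₁ →
      ∃ a ∈ H₀, SurjOn (f a) H₁ univ := by
  induction μ using Cardinal.inductionOn with | _ M
  have hI : #(M ↪ B) ≤ Order.succ #M := (mk_embedding_le_arrow M B).trans hB
  obtain ⟨f, hf⟩ := exists_coloring_surjOn_of_family hμ hA hC hI (fun e ↦ range e)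
    fun e ↦ (mk_range_eq e e.injective).ge
  refine ⟨f, fun H₀ hH₀ H₁ ⟨e⟩ ↦ ?_⟩
  obtain ⟨a, ha, hfa⟩ := hf H₀ hH₀ (e.trans (Function.Embedding.subtype (· ∈ H₁)))
  exact ⟨a, ha, hfa.mono (range_subset_iff.2 fun m ↦ (e m).2) Subset.rfl⟩

theorem succ_power_eq_succ {μ : Cardinal.{u}} (hμ : ℵ₀ ≤ μ) (hGCH : 2 ^ μ = Order.succ μ) :
    Order.succ μ ^ μ = Order.succ μ := by
  rw [← hGCH, ← power_mul, mul_eq_self hμ]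

theorem exists_coloring_surjOn_of_sets {α β γ : Type u} {μ : Cardinal.{u}} {A : Set α} {B : Set β}
    {C : Set γ} (hμ : ℵ₀ ≤ μ) (hA : #A ≤ Order.succ μ) (hB : #B ^ μ ≤ Order.succ μ) (hC : #C ≤ μ)
    (hC_nonempty : C.Nonempty) :
    ∃ f : α → β → γ, (∀ a b, f a b ∈ C) ∧
      ∀ H₀ ⊆ A, μ < #H₀ → ∀ H₁ ⊆ B, μ ≤ #H₁ → ∃ a ∈ H₀, SurjOn (f a) H₁ C := by
  classical
  obtain ⟨c₀, hc₀⟩ := hC_nonempty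
  have : Nonempty C := ⟨⟨c₀, hc₀⟩⟩
  obtain ⟨g, hg⟩ := exists_coloring_surjOn_of_power_le hμ hA hB hC
  let f (a : α) (b : β) : C := if h : a ∈ A ∧ b ∈ B then g ⟨a, h.1⟩ ⟨b, h.2⟩ else ⟨c₀, hc₀⟩
  have f_coe (a : A) (b : B) : f a b = g a b := dif_pos ⟨a.2, b.2⟩
  refine ⟨fun a b ↦ f a b, fun a b ↦ (f a b).2, fun H₀ hH₀ hH₀_card H₁ hH₁ hH₁_card ↦ ?_⟩
  rw [← Subtype.range_coe (s := A)] at hH₀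
  rw [← Subtype.range_coe (s := B)] at hH₁
  rw [← mk_preimage_of_injective_of_subset_range _ _ Subtype.val_injective hH₀] at hH₀_card
  rw [← mk_preimage_of_injective_of_subset_range _ _ Subtype.val_injective hH₁] at hH₁_card
  obtain ⟨a, ha, hga⟩ := hg _ hH₀_card _ hH₁_card
  refine ⟨a, ha, fun c hc ↦ ?_⟩
  obtain ⟨b, hb, hgab⟩ := hga (mem_univ ⟨c, hc⟩)
  exact ⟨b, hb, congrArg Subtype.val ((f_coe a b).trans hgab)⟩

/-- In square bracket notation, a strong form of `(μ⁺, μ⁺) ↛ [μ⁺, μ]_θ`. -/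
theorem gch_implies_negative_polarized_partition_general
    (μ : Cardinal.{u}) (hμ : ℵ₀ ≤ μ) (hGCH : 2 ^ μ = Order.succ μ)
    {θ : Ordinal.{u}} (hθ : θ ≠ 0) (hθμ : θ.card ≤ μ) :
    ∃ f : Ordinal.{u} → Ordinal.{u} → Ordinal.{u},
      (∀ α β, f α β < θ) ∧
      ∀ H₀ ⊆ Iio (Order.succ μ).ord, #H₀ = Cardinal.lift.{u + 1} (Order.succ μ) →
        ∀ H₁ ⊆ Iio (Order.succ μ).ord, #H₁ = Cardinal.lift.{u + 1} μ →
          ∃ α ∈ H₀, SurjOn (f α) H₁ (Iio θ) := by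
  have hA : #(Iio (Order.succ μ).ord) = Order.succ (Cardinal.lift.{u + 1} μ) := by
    rw [mk_Iio_ordinal, card_ord, lift_succ]
  have hA_power : #(Iio (Order.succ μ).ord) ^ Cardinal.lift.{u + 1} μ =
      Order.succ (Cardinal.lift.{u + 1} μ) := by
    rw [mk_Iio_ordinal, card_ord, ← lift_power, succ_power_eq_succ hμ hGCH, lift_succ]
  have hC : #(Iio θ) ≤ Cardinal.lift.{u + 1} μ := by
    rwa [mk_Iio_ordinal, lift_le]
  obtain ⟨f, hf, hf_surj⟩ := exists_coloring_surjOn_of_sets (aleph0_le_lift.2 hμ) hA.le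
    hA_power.le hC ⟨0, pos_iff_ne_zero.2 hθ⟩
  refine ⟨f, hf, fun H₀ hH₀ hH₀_card H₁ hH₁ hH₁_card ↦ hf_surj H₀ hH₀ ?_ H₁ hH₁ hH₁_card.ge⟩
  rw [hH₀_card, lift_lt]
  exact Order.lt_succ μ

/-- (Erdős–Hajnal–Rado) If `2^μ = μ⁺` then the negative polarized partition relation
`(μ⁺, μ) ↛ (μ⁺, μ)_2` holds. -/
theorem gch_implies_negative_polarized_partition
    (μ : Cardinal.{0}) (hμ : ℵ₀ ≤ μ) (hGCH : 2 ^ μ = Order.succ μ) :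
    ∃ f : Ordinal.{0} → Ordinal.{0} → Ordinal.{0},
      (∀ α < (Order.succ μ).ord, ∀ β < μ.ord, f α β < 2) ∧
      ∀ H₀ ⊆ Set.Iio (Order.succ μ).ord, #H₀ = Cardinal.lift.{1} (Order.succ μ) →
        ∀ H₁ ⊆ Set.Iio μ.ord, #H₁ = Cardinal.lift.{1} μ →
          (∃ α ∈ H₀, ∃ β ∈ H₁, f α β = 0) ∧ (∃ α ∈ H₀, ∃ β ∈ H₁, f α β = 1) := by
  have two_le : (2 : Ordinal.{0}).card ≤ μ := by
    simpa using (ofNat_lt_aleph0 (n := 2)).le.trans hμ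
  obtain ⟨f, hf, hf_surj⟩ :=
    gch_implies_negative_polarized_partition_general μ hμ hGCH two_ne_zero two_le
  refine ⟨f, fun α _ β _ ↦ hf α β, fun H₀ hH₀ hH₀_card H₁ hH₁ hH₁_card ↦ ?_⟩
  have hH₁_succ := hH₁.trans (Iio_subset_Iio (ord_le_ord.2 (Order.le_succ μ)))
  obtain ⟨α, hα, hfα⟩ := hf_surj H₀ hH₀ hH₀_card H₁ hH₁_succ hH₁_card
  exact ⟨⟨α, hα, hfα (mem_Iio.2 zero_lt_two)⟩, ⟨α, hα, hfα (mem_Iio.2 one_lt_two)⟩⟩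
end

section
/- Let P be a separative partial order, Q a partial order, and τ : P → Q a complete embedding, i.e., τ is order-preserving, maps incompatible elements of P to incompatible elements of Q, and every q ∈ Q has a reduct in P (some p ∈ P such that τ(r) is compatible with q for every r ≤ p). Let λ be a cardinal and ν an infinite cardinal. If Q is (λ, <ν)-centered, then P is (λ, <ν)-centered. -/
open Cardinal Set

universe u

/-- Two elements of a partial order are compatible if they have a common lower bound. -/
def Compat {P : Type u} [PartialOrder P] (p q : P) : Prop :=
  ∃ r, r ≤ p ∧ r ≤ q

/-- A partial order is separative if whenever `p ≰ q` there is `r ≤ p` incompatible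
with `q`. -/
def Separative (P : Type u) [PartialOrder P] : Prop :=
  ∀ p q : P, ¬ p ≤ q → ∃ r ≤ p, ¬ Compat r q

/-- `τ : P → Q` is a complete embedding: it is order-preserving, preserves
incompatibility, and every `q ∈ Q` has a reduct in `P`. -/
def CompleteEmbedding {P Q : Type u} [PartialOrder P] [PartialOrder Q] (τ : P → Q) : Prop :=
  (∀ p p' : P, p ≤ p' → τ p ≤ τ p') ∧
  (∀ p p' : P, ¬ Compat p p' → ¬ Compat (τ p) (τ p')) ∧
  (∀ q : Q, ∃ p : P, ∀ r ≤ p, Compat (τ r) q)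

/-- `P` is `(λ, <ν)`-centered: `P` is the union of `λ` many subsets each of which is
`<ν`-centered (every subset of size `< ν` has a lower bound in `P`). -/
def IsCentered (P : Type u) [PartialOrder P] (lam ν : Cardinal.{u}) : Prop :=
  ∃ C : Ordinal.{u} → Set P,
    (∀ p : P, ∃ i < lam.ord, p ∈ C i) ∧
    ∀ i < lam.ord, ∀ Z ⊆ C i, #Z < ν → ∃ b : P, ∀ z ∈ Z, b ≤ z

/-!
A reduct `p` of `q` lies below every `z` with `q ≤ τ z`: each `r ≤ p` has `τ r` compatible with
`q`, hence with `τ z`, so `r` is compatible with `z`, and separativity gives `p ≤ z`. Thus `τ` pulls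
sets with a lower bound back to sets with a lower bound, and therefore pulls a centered cover of `Q`
back to one of `P`.
-/

section

variable {P Q : Type u} [PartialOrder P] [PartialOrder Q] {τ : P → Q}

theorem Compat.mono_right {p q q' : P} (h : Compat p q) (hq : q ≤ q') : Compat p q' :=
  let ⟨r, hrp, hrq⟩ := h
  ⟨r, hrp, hrq.trans hq⟩

theorem Separative.le_of_forall_compat (hP : Separative P) {p q : P}
    (h : ∀ r ≤ p, Compat r q) : p ≤ q := by
  by_contra hpq
  obtain ⟨r, hrp, hrq⟩ := hP p q hpq
  exact hrq (h r hrp)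

/-- `p` is a reduct of `q` along `τ`: no extension of `p` is sent by `τ` to an element incompatible
with `q`. This names the relation occurring in the last clause of `CompleteEmbedding`. -/
def IsReduct (τ : P → Q) (p : P) (q : Q) : Prop :=
  ∀ r ≤ p, Compat (τ r) q

theorem IsReduct.mono {p : P} {q q' : Q} (h : IsReduct τ p q) (hq : q ≤ q') : IsReduct τ p q' :=
  fun r hr => (h r hr).mono_right hq

theorem IsReduct.le_of_map (hP : Separative P)
    (hτ : ∀ p p' : P, ¬ Compat p p' → ¬ Compat (τ p) (τ p')) {p z : P}
    (h : IsReduct τ p (τ z)) : p ≤ z :=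
  hP.le_of_forall_compat fun r hr => not_imp_not.mp (hτ r z) (h r hr)

theorem IsReduct.mem_lowerBounds_preimage_Ici (hP : Separative P)
    (hτ : ∀ p p' : P, ¬ Compat p p' → ¬ Compat (τ p) (τ p')) {p : P} {q : Q}
    (h : IsReduct τ p q) : p ∈ lowerBounds (τ ⁻¹' Ici q) :=
  fun _ hqz => (h.mono hqz).le_of_map hP hτ

theorem IsCentered.of_bddBelow_preimage_Ici {lam ν : Cardinal.{u}} (hQ : IsCentered Q lam ν)
    (hτ : ∀ q : Q, BddBelow (τ ⁻¹' Ici q)) : IsCentered P lam ν := by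
  obtain ⟨C, hcover, hcentered⟩ := hQ
  refine ⟨fun i => τ ⁻¹' C i, fun p => hcover (τ p), fun i hi Z hZ hcard => ?_⟩
  obtain ⟨q, hq⟩ := hcentered i hi (τ '' Z) (image_subset_iff.mpr hZ) (mk_image_le.trans_lt hcard)
  obtain ⟨p, hp⟩ := hτ q
  exact ⟨p, fun z hz => hp (hq (τ z) (mem_image_of_mem τ hz))⟩

theorem centered_of_completeEmbedding_general (hP : Separative P)
    (hincompat : ∀ p p' : P, ¬ Compat p p' → ¬ Compat (τ p) (τ p'))
    (hreduct : ∀ q : Q, ∃ p : P, IsReduct τ p q)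
    {lam ν : Cardinal.{u}} (hQ : IsCentered Q lam ν) : IsCentered P lam ν :=
  hQ.of_bddBelow_preimage_Ici fun q =>
    let ⟨p, hp⟩ := hreduct q
    ⟨p, hp.mem_lowerBounds_preimage_Ici hP hincompat⟩

end

/-- If there is a complete embedding of a separative partial order `P` into `Q` and `Q`
is `(λ, <ν)`-centered, then so is `P`. -/
theorem centered_of_completeEmbedding
    {P Q : Type u} [PartialOrder P] [PartialOrder Q]
    (hP : Separative P) (τ : P → Q) (hτ : CompleteEmbedding τ)
    (lam ν : Cardinal.{u}) (hν : ℵ₀ ≤ ν)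
    (hQ : IsCentered Q lam ν) : IsCentered P lam ν :=
  centered_of_completeEmbedding_general hP hτ.2.1 hτ.2.2 hQ
end
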